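/- Let G be a finite subgroup of the orthogonal group O_n(ℝ). Then a ring homomorphism φ: ℝ[X]^G → ℝ extends to a ring homomorphism ℝ[X] → ℝ if and only if φ(∑_{j=1}^n (∂f/∂X_j)²) ≥ 0 for every f ∈ ℝ[X]^G. (Here, since G acts by orthogonal matrices, the polynomial ∑_{j=1}^n (∂f/∂X_j)² is again G-invariant for every G-invariant f, so φ may be applied to it.) -/

import Mathlib

open MvPolynomial

/-- The action of `σ ∈ GL_n(ℝ)` on real polynomials, `(σ · p)(x) = p(σ⁻¹ x)`,
given by substituting `X i ↦ ∑ j (σ⁻¹)_{i j} X j`. -/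
noncomputable def polyAct {n : ℕ} (σ : Matrix.GeneralLinearGroup (Fin n) ℝ) :
    MvPolynomial (Fin n) ℝ →ₐ[ℝ] MvPolynomial (Fin n) ℝ :=
  aeval fun i => ∑ j, (σ⁻¹).val i j • X j

/-- The subalgebra `ℝ[X]^G` of `G`-invariant polynomials. -/
noncomputable def invariants {n : ℕ} (G : Subgroup (Matrix.GeneralLinearGroup (Fin n) ℝ)) :
    Subalgebra ℝ (MvPolynomial (Fin n) ℝ) where
  carrier := {p | ∀ σ ∈ G, polyAct σ p = p}
  mul_mem' := fun hp hq σ hσ => by rw [map_mul, hp σ hσ, hq σ hσ]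
  one_mem' := fun σ _ => map_one (polyAct σ)
  add_mem' := fun hp hq σ hσ => by rw [map_add, hp σ hσ, hq σ hσ]
  zero_mem' := fun σ _ => map_zero (polyAct σ)
  algebraMap_mem' := fun r σ _ => (polyAct σ).commutes r

/-- The Reynolds operator `R_H(p) = (1/|H|) ∑_{σ ∈ H} σ · p` of a (finite) subgroup `H`. -/
noncomputable def reynolds {n : ℕ} (H : Subgroup (Matrix.GeneralLinearGroup (Fin n) ℝ))
    (p : MvPolynomial (Fin n) ℝ) : MvPolynomial (Fin n) ℝ :=
  (Nat.card H : ℝ)⁻¹ • ∑ᶠ σ ∈ (H : Set (Matrix.GeneralLinearGroup (Fin n) ℝ)), polyAct σ p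

/-- The `G`-invariant polynomial `∑_{j=1}^n (∂f/∂X_j)²`. -/
noncomputable def gradSq {n : ℕ} (f : MvPolynomial (Fin n) ℝ) : MvPolynomial (Fin n) ℝ :=
  ∑ j, (pderiv j f) ^ 2

/-
Since `ℝ[X]` is integral over `ℝ[X]^G`, the character `φ` extends to `ℝ[X] → ℂ`, that is, to
evaluation at a point `z ∈ ℂⁿ`, and it remains to see that `z` is real. Interpolate `t ↦ i Im t` on
the coordinates of all points of the orbit of `z` by a real polynomial `Q'`. Then the gradient of
`p = ∑ⱼ Q(Xⱼ)` at each orbit point `w` is `i Im w`. As `G` acts by real orthogonal matrices, the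
average `f` of `p` over `G` still has gradient `i Im z` at `z`, hence
`0 ≤ φ(∑ⱼ (∂f/∂Xⱼ)²) = -‖Im z‖²`.
-/

open scoped ComplexConjugate

section IntegralExtension

theorem nonempty_algHom_of_isIntegral {A B K : Type*} [CommRing A] [CommRing B] [Field K]
    [IsAlgClosed K] [Algebra A B] [Algebra A K] [Algebra.IsIntegral A B]
    (hker : RingHom.ker (algebraMap A B) ≤ RingHom.ker (algebraMap A K)) :
    Nonempty (B →ₐ[A] K) := by
  set P := RingHom.ker (algebraMap A K)
  have : P.IsPrime := RingHom.ker_isPrime _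
  obtain ⟨Q, -, _, hQP⟩ := Ideal.exists_ideal_over_prime_of_isIntegral P (⊥ : Ideal B)
    (by rwa [← RingHom.ker_eq_comap_bot])
  have : Q.LiesOver P := ⟨hQP.symm⟩
  let : Algebra (A ⧸ P) K := (RingHom.kerLift (algebraMap A K)).toAlgebra
  have : FaithfulSMul (A ⧸ P) K :=
    (faithfulSMul_iff_algebraMap_injective _ _).2 (RingHom.kerLift_injective (algebraMap A K))
  have : IsScalarTower A (A ⧸ P) K := .of_algebraMap_eq fun _ => rfl
  have : Module.IsTorsionFree (A ⧸ P) (B ⧸ Q) := FaithfulSMul.to_isTorsionFree _ _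
  let ψ : B ⧸ Q →ₐ[A ⧸ P] K := IsAlgClosed.lift
  exact ⟨(ψ.restrictScalars A).comp (Ideal.Quotient.mkₐ A Q)⟩

theorem exists_algHom_complex_extending {B : Type*} [CommRing B] [Algebra ℝ B]
    (A : Subalgebra ℝ B) [Algebra.IsIntegral A B] (φ : A →+* ℝ) :
    ∃ ψ : B →ₐ[ℝ] ℂ, ∀ a : A, ψ a = φ a := by
  let : Algebra A ℂ := (Complex.ofRealHom.comp φ).toAlgebra
  have hφ : φ.comp (algebraMap ℝ A) = RingHom.id ℝ := Subsingleton.elim _ _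
  have : IsScalarTower ℝ A ℂ :=
    .of_algebraMap_eq fun r => congrArg Complex.ofReal (RingHom.congr_fun hφ r).symm
  have hker : RingHom.ker (algebraMap A B) = ⊥ :=
    (RingHom.injective_iff_ker_eq_bot _).1 Subtype.val_injective
  obtain ⟨ψ⟩ := nonempty_algHom_of_isIntegral (A := A) (B := B) (K := ℂ) (hker.trans_le bot_le)
  exact ⟨ψ.restrictScalars ℝ, ψ.commutes⟩

end IntegralExtension

section UnivariatePolynomials

theorem surjective_polynomial_derivative {k : Type*} [DivisionRing k] [CharZero k] :
    Function.Surjective (Polynomial.derivative : Polynomial k → Polynomial k) := by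
  intro q
  induction q using Polynomial.induction_on' with
  | add p q hp hq =>
    obtain ⟨a, rfl⟩ := hp
    obtain ⟨b, rfl⟩ := hq
    exact ⟨a + b, Polynomial.derivative_add⟩
  | monomial m c =>
    refine ⟨Polynomial.monomial (m + 1) (c / (m + 1)), ?_⟩
    simp [Nat.cast_add_one_ne_zero m]

theorem mem_lifts_ofReal_of_map_conj_eq {P : Polynomial ℂ} (hP : P.map (starRingEnd ℂ) = P) :
    P ∈ Polynomial.lifts (algebraMap ℝ ℂ) := by
  refine (Polynomial.lifts_iff_coeff_lifts P).2 fun m => ?_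
  have hcoeff : conj (P.coeff m) = P.coeff m := by rw [← Polynomial.coeff_map, hP]
  exact ⟨(P.coeff m).re, Complex.conj_eq_iff_re.1 hcoeff⟩

theorem exists_real_polynomial_aeval_eq (S : Finset ℂ) {v : ℂ → ℂ}
    (hv : ∀ t, v (conj t) = conj (v t)) :
    ∃ q : Polynomial ℝ, ∀ t ∈ S, Polynomial.aeval t q = v t := by
  let T := S ∪ S.image conj
  have hT : ∀ t ∈ T, conj t ∈ T := by
    simp only [T, Finset.mem_union, Finset.mem_image]
    rintro _ (ht | ⟨t, ht, rfl⟩)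
    · exact Or.inr ⟨_, ht, rfl⟩
    · exact Or.inl (by rwa [Complex.conj_conj])
  have hinj : Set.InjOn id (T : Set ℂ) := Function.injective_id.injOn
  let P := Lagrange.interpolate T id v
  have hPval : ∀ t ∈ T, P.eval t = v t := fun t ht =>
    Lagrange.eval_interpolate_at_node v hinj ht
  have hPconj : P.map (starRingEnd ℂ) = P := by
    refine Lagrange.eq_interpolate_of_eval_eq v hinj ?_ fun t ht => ?_
    · exact Polynomial.degree_map_le.trans_lt (Lagrange.degree_interpolate_lt v hinj)
    · calc (P.map (starRingEnd ℂ)).eval t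
          = (P.map (starRingEnd ℂ)).eval (conj (conj t)) := by rw [Complex.conj_conj]
        _ = conj (P.eval (conj t)) := Polynomial.eval_map_apply _ _
        _ = v t := by rw [hPval _ (hT t ht), hv, Complex.conj_conj]
  obtain ⟨q, hq⟩ := (Polynomial.mem_lifts P).1 (mem_lifts_ofReal_of_map_conj_eq hPconj)
  refine ⟨q, fun t ht => ?_⟩
  rw [← hPval t (Finset.mem_union_left _ ht), ← hq, Polynomial.eval_map_algebraMap]

end UnivariatePolynomials

section Gradients

variable {ι : Type*}

theorem derivation_aeval [Fintype ι] {R A M : Type*} [CommSemiring R] [CommSemiring A]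
    [Algebra R A] [AddCommMonoid M] [Module A M] [Module R M]
    (D : Derivation R A M) (g : ι → A) (p : MvPolynomial ι R) :
    D (aeval g p) = ∑ i, aeval g (pderiv i p) • D (g i) := by
  classical
  induction p using MvPolynomial.induction_on with
  | C a => simp
  | add p q hp hq => simp only [map_add, hp, hq, add_smul, Finset.sum_add_distrib]
  | mul_X p i hp =>
    simp [pderiv_X, Pi.single_apply, hp, add_smul, Finset.sum_add_distrib, Finset.smul_sum,
      smul_smul, apply_ite, ite_smul, mul_comm, add_comm]

/-- The complex point `z = (ψ X_i)_i` satisfies `∇p(z) = i Im z`. An average of such polynomials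
is again one, and its squared gradient at `z` is `-‖Im z‖²`. -/
def HasImGradient (ψ : MvPolynomial ι ℝ →ₐ[ℝ] ℂ) (p : MvPolynomial ι ℝ) : Prop :=
  ∀ i, ψ (pderiv i p) = Complex.I * (ψ (X i)).im

theorem exists_hasImGradient {κ : Type*} [Finite ι] [Finite κ]
    (ψ : κ → MvPolynomial ι ℝ →ₐ[ℝ] ℂ) :
    ∃ p : MvPolynomial ι ℝ, ∀ k, HasImGradient (ψ k) p := by
  classical
  cases nonempty_fintype ι
  cases nonempty_fintype κ
  obtain ⟨q, hq⟩ := exists_real_polynomial_aeval_eq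
    (Finset.univ.image fun x : κ × ι => ψ x.1 (X x.2)) (v := fun t => Complex.I * t.im)
    fun t => by simp
  obtain ⟨Q, rfl⟩ := surjective_polynomial_derivative q
  refine ⟨∑ j, Polynomial.aeval (X j) Q, fun k i => ?_⟩
  have hpderiv : pderiv i (∑ j, Polynomial.aeval (X j : MvPolynomial ι ℝ) Q) =
      Polynomial.aeval (X i) (Polynomial.derivative Q) := by
    simp [pderiv_X, Pi.single_apply]
  rw [hpderiv, ← Polynomial.aeval_algHom_apply]
  exact hq _ (Finset.mem_image_of_mem _ (Finset.mem_univ (k, i)))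

end Gradients

section Action

variable {n : ℕ} {G : Subgroup (Matrix.GeneralLinearGroup (Fin n) ℝ)}
  (σ τ : Matrix.GeneralLinearGroup (Fin n) ℝ)

theorem polyAct_X (i : Fin n) : polyAct σ (X i) = ∑ j, (σ⁻¹).val i j • X j :=
  aeval_X _ _

theorem polyAct_one : polyAct (1 : Matrix.GeneralLinearGroup (Fin n) ℝ) = AlgHom.id ℝ _ := by
  ext1 i
  simp [polyAct_X, Matrix.one_apply]

theorem polyAct_mul : polyAct (σ * τ) = (polyAct σ).comp (polyAct τ) := by
  ext1 i
  simp only [AlgHom.comp_apply, polyAct_X, map_sum, map_smul, Finset.smul_sum, mul_inv_rev,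
    Units.val_mul, Matrix.mul_apply, Finset.sum_smul, smul_smul]
  exact Finset.sum_comm

theorem polyAct_polyAct_inv (p : MvPolynomial (Fin n) ℝ) : polyAct σ (polyAct σ⁻¹ p) = p := by
  rw [← AlgHom.comp_apply, ← polyAct_mul, mul_inv_cancel, polyAct_one, AlgHom.id_apply]

theorem polyAct_inv_polyAct (p : MvPolynomial (Fin n) ℝ) : polyAct σ⁻¹ (polyAct σ p) = p := by
  simpa only [inv_inv] using polyAct_polyAct_inv σ⁻¹ p

theorem sum_smul_polyAct_X (i : Fin n) : ∑ j, σ.val i j • polyAct σ (X j) = X i := by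
  simpa only [polyAct_X, inv_inv, map_sum, map_smul] using polyAct_polyAct_inv σ (X i)

theorem pderiv_polyAct (j : Fin n) (p : MvPolynomial (Fin n) ℝ) :
    pderiv j (polyAct σ p) = ∑ i, (σ⁻¹).val i j • polyAct σ (pderiv i p) := by
  refine (derivation_aeval _ _ p).trans (Finset.sum_congr rfl fun i _ => ?_)
  simp [pderiv_X, Pi.single_apply, polyAct, smul_eq_C_mul, mul_comm]

theorem polyAct_pderiv (j : Fin n) (p : MvPolynomial (Fin n) ℝ) :
    polyAct σ (pderiv j p) = ∑ i, σ.val i j • pderiv i (polyAct σ p) := by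
  simpa only [polyAct_inv_polyAct, polyAct_polyAct_inv, inv_inv, map_sum, map_smul]
    using congrArg (polyAct σ) (pderiv_polyAct σ⁻¹ j (polyAct σ p))

variable (n) in
/-- `polyAct` as a monoid homomorphism, which turns `ℝ[X]` into a ring with `GL_n(ℝ)`-action. -/
noncomputable def polyActHom : Matrix.GeneralLinearGroup (Fin n) ℝ →*
    (MvPolynomial (Fin n) ℝ →+* MvPolynomial (Fin n) ℝ) where
  toFun σ := polyAct σ
  map_one' := by rw [polyAct_one]; rfl
  map_mul' σ τ := by rw [polyAct_mul]; rfl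

theorem isIntegral_invariants [Finite G] :
    Algebra.IsIntegral (invariants G) (MvPolynomial (Fin n) ℝ) := by
  let : MulSemiringAction G (MvPolynomial (Fin n) ℝ) :=
    MulSemiringAction.compHom _ ((polyActHom n).comp G.subtype)
  have : SMulCommClass G (invariants G) (MvPolynomial (Fin n) ℝ) :=
    ⟨fun σ a p => (map_mul (polyAct σ.1) a.1 p).trans (by rw [a.2 σ.1 σ.2]; rfl)⟩
  have : Algebra.IsInvariant (invariants G) (MvPolynomial (Fin n) ℝ) G :=
    ⟨fun p hp => ⟨⟨p, fun σ hσ => hp ⟨σ, hσ⟩⟩, rfl⟩⟩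
  exact Algebra.IsInvariant.isIntegral _ _ G

theorem reynolds_eq_sum [Fintype G] (p : MvPolynomial (Fin n) ℝ) :
    reynolds G p = (Nat.card G : ℝ)⁻¹ • ∑ σ : G, polyAct σ.1 p := by
  rw [reynolds, ← finsum_set_coe_eq_finsum_mem, finsum_eq_sum_of_fintype]
  rfl

theorem reynolds_mem_invariants [Finite G] (p : MvPolynomial (Fin n) ℝ) :
    reynolds G p ∈ invariants G := by
  cases nonempty_fintype G
  intro τ hτ
  simp only [reynolds_eq_sum, map_smul, map_sum, ← AlgHom.comp_apply, ← polyAct_mul]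
  congr 1
  exact Fintype.sum_equiv (Equiv.mulLeft (⟨τ, hτ⟩ : G)) _ _ fun _ => rfl

end Action

section Orthogonal

open scoped Matrix

variable {n : ℕ} {σ : Matrix.GeneralLinearGroup (Fin n) ℝ}
  {ψ : MvPolynomial (Fin n) ℝ →ₐ[ℝ] ℂ} {p : MvPolynomial (Fin n) ℝ}

theorem val_inv_apply_of_orthogonal (hσ : σ.valᵀ * σ.val = 1) (i j : Fin n) :
    (σ⁻¹).val i j = σ.val j i := by
  rw [Units.inv_eq_of_mul_eq_one_left hσ, Matrix.transpose_apply]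

theorem gradSq_polyAct (hσ : σ.valᵀ * σ.val = 1) (p : MvPolynomial (Fin n) ℝ) :
    gradSq (polyAct σ p) = polyAct σ (gradSq p) := by
  calc gradSq (polyAct σ p)
      = ∑ j, ∑ i, σ.val j i • (pderiv j (polyAct σ p) * polyAct σ (pderiv i p)) := by
        refine Finset.sum_congr rfl fun j _ => ?_
        rw [sq]
        nth_rw 2 [pderiv_polyAct]
        simp only [val_inv_apply_of_orthogonal hσ, Finset.mul_sum, mul_smul_comm]
    _ = ∑ i, polyAct σ (pderiv i p) ^ 2 := by
        rw [Finset.sum_comm]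
        refine Finset.sum_congr rfl fun i _ => ?_
        rw [sq]
        nth_rw 2 [polyAct_pderiv]
        simp only [Finset.sum_mul, smul_mul_assoc]
    _ = polyAct σ (gradSq p) := by simp only [gradSq, map_sum, map_pow]

theorem hasImGradient_polyAct (hσ : σ.valᵀ * σ.val = 1)
    (hp : HasImGradient (ψ.comp (polyAct σ)) p) : HasImGradient ψ (polyAct σ p) := by
  intro j
  calc ψ (pderiv j (polyAct σ p))
      = ∑ i, σ.val j i • ψ (polyAct σ (pderiv i p)) := by
        simp only [pderiv_polyAct, val_inv_apply_of_orthogonal hσ, map_sum, map_smul]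
    _ = ∑ i, σ.val j i • (Complex.I * (ψ (polyAct σ (X i))).im) :=
        Finset.sum_congr rfl fun i _ => congrArg _ (hp i)
    _ = Complex.I * (ψ (∑ i, σ.val j i • polyAct σ (X i))).im := by
        simp [Finset.mul_sum, mul_left_comm]
    _ = Complex.I * (ψ (X j)).im := by rw [sum_smul_polyAct_X]

theorem HasImGradient.map_gradSq (hp : HasImGradient ψ p) :
    ψ (gradSq p) = (-∑ j, (ψ (X j)).im ^ 2 : ℝ) := by
  simp [gradSq, hp _, mul_pow]

variable {G : Subgroup (Matrix.GeneralLinearGroup (Fin n) ℝ)}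

theorem gradSq_mem_invariants (hG : ∀ σ ∈ G, σ.valᵀ * σ.val = 1) (hp : p ∈ invariants G) :
    gradSq p ∈ invariants G := fun σ hσ => by
  rw [← gradSq_polyAct (hG σ hσ), hp σ hσ]

variable [Finite G]

theorem hasImGradient_reynolds (hG : ∀ σ ∈ G, σ.valᵀ * σ.val = 1)
    (hp : ∀ σ : G, HasImGradient (ψ.comp (polyAct σ.1)) p) :
    HasImGradient ψ (reynolds G p) := by
  cases nonempty_fintype G
  intro j
  have hσ (σ : G) := hasImGradient_polyAct (hG σ.1 σ.2) (hp σ) j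
  simp [reynolds_eq_sum, hσ]

theorem exists_mem_invariants_hasImGradient (hG : ∀ σ ∈ G, σ.valᵀ * σ.val = 1)
    (ψ : MvPolynomial (Fin n) ℝ →ₐ[ℝ] ℂ) : ∃ f ∈ invariants G, HasImGradient ψ f := by
  obtain ⟨p, hp⟩ := exists_hasImGradient fun σ : G => ψ.comp (polyAct σ.1)
  exact ⟨reynolds G p, reynolds_mem_invariants p, hasImGradient_reynolds hG hp⟩

theorem im_map_X_eq_zero_of_gradSq_nonneg (hG : ∀ σ ∈ G, σ.valᵀ * σ.val = 1)
    (hψ : ∀ f ∈ invariants G, 0 ≤ (ψ (gradSq f)).re) (j : Fin n) : (ψ (X j)).im = 0 := by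
  obtain ⟨f, hf, hgrad⟩ := exists_mem_invariants_hasImGradient hG ψ
  have hsum : ∑ j, (ψ (X j)).im ^ 2 ≤ 0 := by
    simpa only [hgrad.map_gradSq, Complex.ofReal_re, neg_nonneg] using hψ f hf
  have hsq : (ψ (X j)).im ^ 2 ≤ 0 :=
    (Finset.single_le_sum (fun j _ => sq_nonneg (ψ (X j)).im) (Finset.mem_univ j)).trans hsum
  exact pow_eq_zero_iff two_ne_zero |>.1 (hsq.antisymm (sq_nonneg _))

end Orthogonal

theorem exists_algHom_real_of_im_X_eq_zero {ι : Type*} {ψ : MvPolynomial ι ℝ →ₐ[ℝ] ℂ}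
    (hψ : ∀ i, (ψ (X i)).im = 0) : ∃ χ : MvPolynomial ι ℝ →ₐ[ℝ] ℝ, ∀ p, (χ p : ℂ) = ψ p := by
  have hψ' : Complex.ofRealAm.comp (aeval fun i => (ψ (X i)).re) = ψ := by
    ext1 i
    apply Complex.ext <;> simp [hψ]
  exact ⟨aeval fun i => (ψ (X i)).re, fun p => AlgHom.congr_fun hψ' p⟩

/-- for a finite subgroup `G` of the orthogonal group `O_n(ℝ)`, a ring
homomorphism `φ : ℝ[X]^G → ℝ` extends to `ℝ[X]` iff `φ(∑ⱼ (∂f/∂Xⱼ)²) ≥ 0` for all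
`f ∈ ℝ[X]^G`. -/
theorem statement_0 {n : ℕ} (hn : 1 ≤ n)
    (G : Subgroup (Matrix.GeneralLinearGroup (Fin n) ℝ)) [Finite G]
    (hO : ∀ σ ∈ G, σ.val.transpose * σ.val = (1 : Matrix (Fin n) (Fin n) ℝ))
    (φ : invariants G →+* ℝ) :
    (∃ ψ : MvPolynomial (Fin n) ℝ →+* ℝ,
        ∀ (f : MvPolynomial (Fin n) ℝ) (hf : f ∈ invariants G), ψ f = φ ⟨f, hf⟩) ↔
      (∀ (f : MvPolynomial (Fin n) ℝ), f ∈ invariants G →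
        ∀ (h : gradSq f ∈ invariants G), 0 ≤ φ ⟨gradSq f, h⟩) := by
  constructor
  · rintro ⟨ψ, hψ⟩ f - h
    rw [← hψ, gradSq, map_sum]
    exact Finset.sum_nonneg fun j _ => by rw [map_pow]; exact sq_nonneg _
  · intro hφ
    have := isIntegral_invariants (G := G)
    obtain ⟨ψ, hψ⟩ := exists_algHom_complex_extending (invariants G) φ
    have hnonneg : ∀ f ∈ invariants G, 0 ≤ (ψ (gradSq f)).re := fun f hf => by
      have h := gradSq_mem_invariants hO hf
      simpa only [hψ ⟨gradSq f, h⟩, Complex.ofReal_re] using hφ f hf h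
    obtain ⟨χ, hχ⟩ := exists_algHom_real_of_im_X_eq_zero
      (im_map_X_eq_zero_of_gradSq_nonneg hO hnonneg)
    exact ⟨χ, fun f hf => Complex.ofReal_injective ((hχ f).trans (hψ ⟨f, hf⟩))⟩
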